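/- Let N be an integer, 1 < p < N, let r > 0 and let φ be a cutoff of radius r; set u_ε = φ · U_ε. Then there exists a constant C > 0 (depending only on N, p, r and φ) such that for every ε > 0, every x ∈ ℝ^N, and every y ∈ ℝ^N with ‖y‖ ≥ r and ‖x−y‖ ≤ r/2, one has |u_ε(x) − u_ε(y)| ≤ C ε^{(N−p)/(p(p−1))} ‖x−y‖. -/

import Mathlib

open Metric

/-- The Aubin–Talenti bubble `U_ε`. -/
noncomputable def bubble (N : ℕ) (p ε : ℝ) (x : EuclideanSpace ℝ (Fin N)) : ℝ :=
  ((N : ℝ) * (((N : ℝ) - p) / (p - 1)) ^ (p - 1)) ^ (((N : ℝ) - p) / p ^ 2) *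
    ε ^ (((N : ℝ) - p) / (p * (p - 1))) *
    (ε ^ (p / (p - 1)) + ‖x‖ ^ (p / (p - 1))) ^ (-(((N : ℝ) - p) / p))

/-!
The amplitude `ε ^ ((N - p) / (p * (p - 1)))` is an explicit factor of `U_ε`, so it suffices to
bound the profile `t ↦ (e + t ^ a) ^ (-b)`, where `e = ε ^ a`, uniformly in `e`. For `t > 0` the
profile and its derivative are dominated in absolute value by those of the limit `t ^ (-(a * b))`
as `e → 0`, which decrease in `t`. Hence `ε ^ (-(N - p) / (p * (p - 1))) * U_ε` is bounded and
Lipschitz on `{‖x‖ ≥ s}` uniformly in `ε`, and so is its product with a bounded Lipschitz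
function. If `‖y‖ ≥ r` and `‖x - y‖ ≤ r / 2`, then `x` and `y` both lie in `{‖·‖ ≥ r / 2}`.
-/

open scoped NNReal

lemma norm_mul_sub_mul_le {R : Type*} [NonUnitalSeminormedRing R] (a b c d : R) :
    ‖a * b - c * d‖ ≤ ‖a - c‖ * ‖b‖ + ‖c‖ * ‖b - d‖ :=
  calc
    ‖a * b - c * d‖ = ‖(a - c) * b + c * (b - d)‖ := by
      rw [sub_mul, mul_sub, sub_add_sub_cancel]
    _ ≤ ‖(a - c) * b‖ + ‖c * (b - d)‖ := norm_add_le _ _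
    _ ≤ ‖a - c‖ * ‖b‖ + ‖c‖ * ‖b - d‖ := add_le_add (norm_mul_le _ _) (norm_mul_le _ _)

lemma sub_le_norm_of_norm_sub_le {E : Type*} [SeminormedAddCommGroup E] {x y : E} {r δ : ℝ}
    (hy : r ≤ ‖y‖) (hxy : ‖x - y‖ ≤ δ) : r - δ ≤ ‖x‖ := by
  have : ‖y‖ - ‖x‖ ≤ ‖x - y‖ := norm_sub_rev x y ▸ norm_sub_norm_le y x
  linarith

lemma exists_lipschitzWith_of_contDiff_of_eq_zero_off_ball {E F : Type*} [NormedAddCommGroup E]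
    [NormedSpace ℝ E] [ProperSpace E] [NormedAddCommGroup F] [NormedSpace ℝ F] {f : E → F}
    (hf : ContDiff ℝ 1 f) {c : E} {R : ℝ} (hf0 : ∀ x ∉ ball c R, f x = 0) :
    ∃ L, LipschitzWith L f :=
  have hsupp : HasCompactSupport f := .intro (isCompact_closedBall c R)
    fun x hx ↦ hf0 x (mt (@ball_subset_closedBall _ _ c R x) hx)
  hf.lipschitzWith_of_hasCompactSupport hsupp one_ne_zero

lemma add_rpow_rpow_le_rpow_mul {a c e t : ℝ} (he : 0 ≤ e) (hc : c ≤ 0) (ht : 0 < t) :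
    (e + t ^ a) ^ c ≤ t ^ (a * c) :=
  calc
    (e + t ^ a) ^ c ≤ (t ^ a) ^ c :=
      Real.rpow_le_rpow_of_nonpos (Real.rpow_pos_of_pos ht a) (le_add_of_nonneg_left he) hc
    _ = t ^ (a * c) := (Real.rpow_mul ht.le a c).symm

section RadialProfile

/-- The radial profile of the Aubin–Talenti bubble without its amplitude: `U_ε x` is a multiple of
`radialProfile a b e ‖x‖` with `a = p / (p - 1)`, `b = (N - p) / p` and `e = ε ^ a`. -/
noncomputable def radialProfile (a b e t : ℝ) : ℝ :=
  (e + t ^ a) ^ (-b)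

variable {a b e s t u v : ℝ}

lemma radialProfile_nonneg (he : 0 ≤ e) (ht : 0 ≤ t) : 0 ≤ radialProfile a b e t := by
  unfold radialProfile
  positivity

lemma radialProfile_le (ha : 0 ≤ a) (hb : 0 ≤ b) (he : 0 ≤ e) (hs : 0 < s) (hst : s ≤ t) :
    radialProfile a b e t ≤ s ^ (-(a * b)) :=
  calc
    radialProfile a b e t ≤ t ^ (a * -b) :=
      add_rpow_rpow_le_rpow_mul he (neg_nonpos.2 hb) (hs.trans_le hst)
    _ = t ^ (-(a * b)) := by rw [mul_neg]
    _ ≤ s ^ (-(a * b)) := Real.rpow_le_rpow_of_nonpos hs hst (neg_nonpos.2 (mul_nonneg ha hb))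

lemma hasDerivAt_radialProfile (he : 0 ≤ e) (ht : 0 < t) :
    HasDerivAt (radialProfile a b e) (-(a * b * (t ^ (a - 1) * (e + t ^ a) ^ (-b - 1)))) t := by
  have hbase : HasDerivAt (fun t ↦ e + t ^ a) (a * t ^ (a - 1)) t :=
    (Real.hasDerivAt_rpow_const (Or.inl ht.ne')).const_add e
  have hbase_ne : e + t ^ a ≠ 0 := by positivity
  exact (hbase.rpow_const (p := -b) (Or.inl hbase_ne)).congr_deriv (by ring)

lemma abs_deriv_radialProfile_le (ha : 0 ≤ a) (hb : 0 ≤ b) (he : 0 ≤ e) (hs : 0 < s)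
    (hst : s ≤ t) : |deriv (radialProfile a b e) t| ≤ a * b * s ^ (-(a * b) - 1) := by
  have ht : 0 < t := hs.trans_le hst
  have hab : 0 ≤ a * b := mul_nonneg ha hb
  rw [(hasDerivAt_radialProfile he ht).deriv, abs_neg, abs_of_nonneg (by positivity)]
  refine mul_le_mul_of_nonneg_left ?_ hab
  calc
    t ^ (a - 1) * (e + t ^ a) ^ (-b - 1) ≤ t ^ (a - 1) * t ^ (a * (-b - 1)) := by
      gcongr
      exact add_rpow_rpow_le_rpow_mul he (by linarith) ht
    _ = t ^ (-(a * b) - 1) := by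
      rw [← Real.rpow_add ht]
      ring_nf
    _ ≤ s ^ (-(a * b) - 1) := Real.rpow_le_rpow_of_nonpos hs hst (by linarith)

lemma abs_radialProfile_sub_le (ha : 0 ≤ a) (hb : 0 ≤ b) (he : 0 ≤ e) (hs : 0 < s)
    (hu : s ≤ u) (hv : s ≤ v) :
    |radialProfile a b e u - radialProfile a b e v| ≤ a * b * s ^ (-(a * b) - 1) * |u - v| :=
  (convex_Ici s).norm_image_sub_le_of_norm_deriv_le
    (fun _ ht ↦ (hasDerivAt_radialProfile he (hs.trans_le ht)).differentiableAt)
    (fun _ ht ↦ abs_deriv_radialProfile_le ha hb he hs ht) hv hu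

end RadialProfile

section Bubble

/-- The normalizing constant `K_{N,p}` of the Aubin–Talenti bubble. -/
noncomputable def bubbleConst (N : ℕ) (p : ℝ) : ℝ :=
  ((N : ℝ) * (((N : ℝ) - p) / (p - 1)) ^ (p - 1)) ^ (((N : ℝ) - p) / p ^ 2)

variable {N : ℕ} {p ε s : ℝ} {x y : EuclideanSpace ℝ (Fin N)}

lemma bubbleConst_nonneg (hp : 1 < p) (hpN : p ≤ N) : 0 ≤ bubbleConst N p := by
  have : 0 ≤ ((N : ℝ) - p) / (p - 1) := div_nonneg (by linarith) (by linarith)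
  unfold bubbleConst
  positivity

lemma bubble_eq_mul_radialProfile (N : ℕ) (p ε : ℝ) (x : EuclideanSpace ℝ (Fin N)) :
    bubble N p ε x = bubbleConst N p * ε ^ (((N : ℝ) - p) / (p * (p - 1))) *
      radialProfile (p / (p - 1)) (((N : ℝ) - p) / p) (ε ^ (p / (p - 1))) ‖x‖ :=
  rfl

lemma abs_bubble_le (hp : 1 < p) (hpN : p ≤ N) (hε : 0 ≤ ε) (hs : 0 < s) (hx : s ≤ ‖x‖) :
    |bubble N p ε x| ≤ bubbleConst N p * ε ^ (((N : ℝ) - p) / (p * (p - 1))) *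
      s ^ (-(((N : ℝ) - p) / (p - 1))) := by
  have hp0 : 0 < p := by linarith
  have ha : 0 ≤ p / (p - 1) := div_nonneg hp0.le (by linarith)
  have hb : 0 ≤ ((N : ℝ) - p) / p := div_nonneg (by linarith) hp0.le
  have he : 0 ≤ ε ^ (p / (p - 1)) := Real.rpow_nonneg hε _
  have hK := bubbleConst_nonneg hp hpN
  rw [bubble_eq_mul_radialProfile, abs_mul, abs_of_nonneg (by positivity),
    abs_of_nonneg (radialProfile_nonneg he (norm_nonneg x))]
  gcongr
  simpa only [div_mul_div_cancel₀' hp0.ne'] using radialProfile_le ha hb he hs hx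

lemma abs_bubble_sub_bubble_le (hp : 1 < p) (hpN : p ≤ N) (hε : 0 ≤ ε) (hs : 0 < s)
    (hx : s ≤ ‖x‖) (hy : s ≤ ‖y‖) :
    |bubble N p ε x - bubble N p ε y| ≤
      bubbleConst N p * ε ^ (((N : ℝ) - p) / (p * (p - 1))) *
        (((N : ℝ) - p) / (p - 1) * s ^ (-(((N : ℝ) - p) / (p - 1)) - 1) * ‖x - y‖) := by
  have hp0 : 0 < p := by linarith
  have ha : 0 ≤ p / (p - 1) := div_nonneg hp0.le (by linarith)
  have hb : 0 ≤ ((N : ℝ) - p) / p := div_nonneg (by linarith) hp0.le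
  have he : 0 ≤ ε ^ (p / (p - 1)) := Real.rpow_nonneg hε _
  have hK := bubbleConst_nonneg hp hpN
  have : 0 ≤ ((N : ℝ) - p) / (p - 1) := div_nonneg (by linarith) (by linarith)
  have hprofile := abs_radialProfile_sub_le ha hb he hs hx hy
  rw [div_mul_div_cancel₀' hp0.ne'] at hprofile
  rw [bubble_eq_mul_radialProfile, bubble_eq_mul_radialProfile, ← mul_sub, abs_mul,
    abs_of_nonneg (by positivity)]
  gcongr
  exact hprofile.trans (by gcongr; exact abs_norm_sub_norm_le x y)

end Bubble

theorem truncated_bubble_lipschitz_general (N : ℕ) (p : ℝ) (hp : 1 < p) (hpN : p ≤ N)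
    {s : ℝ} (hs : 0 < s) {φ : EuclideanSpace ℝ (Fin N) → ℝ} {L B : ℝ≥0}
    (hφ : LipschitzOnWith L φ {x | s ≤ ‖x‖}) (hφB : ∀ x, s ≤ ‖x‖ → |φ x| ≤ B) :
    ∃ C : ℝ, 0 < C ∧ ∀ ε : ℝ, 0 < ε → ∀ x y : EuclideanSpace ℝ (Fin N),
      s ≤ ‖x‖ → s ≤ ‖y‖ →
      |φ x * bubble N p ε x - φ y * bubble N p ε y| ≤
        C * ε ^ (((N : ℝ) - p) / (p * (p - 1))) * ‖x - y‖ := by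
  set K := bubbleConst N p
  set q := ((N : ℝ) - p) / (p - 1)
  set M := s ^ (-q)
  set D := q * s ^ (-q - 1)
  have hK : 0 ≤ K := bubbleConst_nonneg hp hpN
  have : 0 ≤ q := div_nonneg (by linarith) (by linarith)
  refine ⟨K * (L * M + B * D) + 1, by positivity, fun ε hε x y hx hy ↦ ?_⟩
  set A := ε ^ (((N : ℝ) - p) / (p * (p - 1)))
  have hφxy : |φ x - φ y| ≤ L * ‖x - y‖ := hφ.norm_sub_le hx hy
  calc
    |φ x * bubble N p ε x - φ y * bubble N p ε y|
      ≤ |φ x - φ y| * |bubble N p ε x| + |φ y| * |bubble N p ε x - bubble N p ε y| :=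
        norm_mul_sub_mul_le (φ x) (bubble N p ε x) (φ y) (bubble N p ε y)
    _ ≤ L * ‖x - y‖ * (K * A * M) + B * (K * A * (D * ‖x - y‖)) := by
        gcongr
        · exact abs_bubble_le hp hpN hε.le hs hx
        · exact hφB y hy
        · exact abs_bubble_sub_bubble_le hp hpN hε.le hs hx hy
    _ = K * (L * M + B * D) * A * ‖x - y‖ := by ring
    _ ≤ (K * (L * M + B * D) + 1) * A * ‖x - y‖ := by
        gcongr
        exact le_add_of_nonneg_right zero_le_one

/-- Lipschitz‐type estimate for `u_ε = φ U_ε` away from the origin: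
`|u_ε(x) − u_ε(y)| ≤ C ε^{(N−p)/(p(p−1))} ‖x−y‖` whenever `‖y‖ ≥ r`, `‖x−y‖ ≤ r/2`. -/
theorem truncated_bubble_lipschitz (N : ℕ) (p : ℝ) (hp : 1 < p) (hpN : p < N)
    (r : ℝ) (hr : 0 < r) (φ : EuclideanSpace ℝ (Fin N) → ℝ) (hφ : ContDiff ℝ 1 φ)
    (hφ01 : ∀ x, 0 ≤ φ x ∧ φ x ≤ 1)
    (hφ1 : ∀ x ∈ closedBall (0 : EuclideanSpace ℝ (Fin N)) r, φ x = 1)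
    (hφ0 : ∀ x ∉ ball (0 : EuclideanSpace ℝ (Fin N)) (2 * r), φ x = 0) :
    ∃ C : ℝ, 0 < C ∧ ∀ ε : ℝ, 0 < ε → ∀ x y : EuclideanSpace ℝ (Fin N),
      r ≤ ‖y‖ → ‖x - y‖ ≤ r / 2 →
      |φ x * bubble N p ε x - φ y * bubble N p ε y| ≤
        C * ε ^ (((N : ℝ) - p) / (p * (p - 1))) * ‖x - y‖ := by
  obtain ⟨L, hL⟩ := exists_lipschitzWith_of_contDiff_of_eq_zero_off_ball hφ hφ0
  obtain ⟨C, hC, hlip⟩ := truncated_bubble_lipschitz_general N p hp hpN.le (half_pos hr)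
    (B := 1) hL.lipschitzOnWith fun x _ ↦ (abs_of_nonneg (hφ01 x).1).trans_le (hφ01 x).2
  exact ⟨C, hC, fun ε hε x y hy hxy ↦ hlip ε hε x y
    (sub_half r ▸ sub_le_norm_of_norm_sub_le hy hxy) ((half_le_self hr.le).trans hy)⟩
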